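/- Let K be a finite extension of ℚ₂ and let L = K(√d), d ∈ K^× ∖ K^{×2}, be a ramified quadratic extension of K. Then there exists an integer n ≥ 1 such that every unit u ∈ U_{n+1} is a norm from L^× (i.e. U_{n+1} ⊆ N_{L|K}(L^×)), while U_n is not contained in N_{L|K}(L^×). -/

import Mathlib

/-- An additively written, normalized (i.e. surjective onto `ℤ`) discrete
valuation on a field `K`.  All axioms are imposed at nonzero arguments only,
so the value of `v` at `0` is irrelevant.  For a finite extension `K` of
`ℚ_[p]`, the normalized valuation `v : K^× → ℤ` of the paper is such a
structure. -/
structure DValuation (K : Type*) [Field K] where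
  /-- the valuation map -/
  v : K → ℤ
  v_mul : ∀ ⦃x y : K⦄, x ≠ 0 → y ≠ 0 → v (x * y) = v x + v y
  min_le_v_add : ∀ ⦃x y : K⦄, x ≠ 0 → y ≠ 0 → x + y ≠ 0 → min (v x) (v y) ≤ v (x + y)
  v_surj : ∀ m : ℤ, ∃ x : K, x ≠ 0 ∧ v x = m

namespace DValuation

variable {K : Type*} [Field K] (w : DValuation K)

/-- `u ∈ U_m` : `u` is (a unit) congruent to `1` modulo `𝔭^m`; for `m ≥ 1`
this forces `v u = 0`, i.e. `u ∈ 𝔬^×`. -/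
def IsUnit₁ (m : ℤ) (u : K) : Prop :=
  u = 1 ∨ m ≤ w.v (u - 1)

end DValuation

/-!
Let `π` be a uniformizer of `L`, with trace `T ∈ 𝔭` and norm `P`. Then `P` is a uniformizer of `K`
and, in the basis `1, π`, the norm form of `L` is `a² + T a b + P b²`. As `a²` and `P b²` have
valuations of different parity, no cancellation occurs between them, so that a value of the form
close to `1` forces `a - 1` and `b` to be small. To first order, the condition that the form
represents `1 + y` is then `T b + P b² = y` if `v T ≤ v 2`, and `2 z + z² = y` with `z = a - 1`
otherwise. After rescaling, the left-hand side has two distinct roots in the residue field, so it is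
not injective there, hence not surjective as the residue field is finite: some principal unit is not
a norm. On the other hand, by Hensel's lemma every unit in `U_{2 v(2) + 1}` is a square, hence a
norm. So `n + 1` may be taken to be the smallest `m` for which `U_m` consists of norms.
-/

open WithZero

/-- The norm form, in the basis `1, y`, of a quadratic extension containing an element `y` of
trace `T` and norm `P`. -/
def normForm {R : Type*} [CommRing R] (T P a b : R) : R := a ^ 2 + T * a * b + P * b ^ 2

section Quadratic

variable {R S : Type*} [CommRing R] [CommRing S] [Algebra R S] (B : Module.Basis (Fin 2) R S)

include B

lemma norm_algebraMap_add_algebraMap_mul (a b : R) (y : S) :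
    Algebra.norm R (algebraMap R S a + algebraMap R S b * y) =
      normForm (Algebra.trace R S y) (Algebra.norm R y) a b := by
  simp only [normForm, Algebra.norm_eq_matrix_det B, Algebra.trace_eq_matrix_trace B, map_add,
    map_mul, AlgHom.commutes, Matrix.det_fin_two, Matrix.trace_fin_two,
    Matrix.algebraMap_eq_diagonal, Fin.isValue, Matrix.add_apply, Matrix.diagonal_apply_eq,
    Pi.algebraMap_apply, Algebra.algebraMap_self, RingHom.id_apply, Matrix.diagonal_mul, ne_eq,
    zero_ne_one, not_false_eq_true, Matrix.diagonal_apply_ne, zero_add, one_ne_zero]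
  ring

lemma sq_eq_trace_mul_sub_norm (y : S) :
    y ^ 2 = algebraMap R S (Algebra.trace R S y) * y - algebraMap R S (Algebra.norm R y) := by
  apply Algebra.leftMulMatrix_injective B
  simp only [map_sub, map_mul, map_pow, AlgHom.commutes, Algebra.trace_eq_matrix_trace B,
    Algebra.norm_eq_matrix_det B]
  ext i j
  fin_cases i <;> fin_cases j <;>
    simp [sq, Matrix.mul_apply, Matrix.det_fin_two, Matrix.trace_fin_two,
      Matrix.algebraMap_matrix_apply] <;> ring

end Quadratic

namespace DValuation

variable {K : Type*} [Field K] (w : DValuation K)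

lemma v_one : w.v 1 = 0 := by
  simpa using w.v_mul (one_ne_zero (α := K)) one_ne_zero

open Classical in
/-- The valuation `x ↦ exp (-v x)` with values in `ℤᵐ⁰` attached to `w`; it sends `0` to `0`,
whatever the value `w.v 0`. -/
noncomputable def valuation : Valuation K ℤᵐ⁰ where
  toFun x := if x = 0 then 0 else exp (-w.v x)
  map_zero' := if_pos rfl
  map_one' := by simp [w.v_one]
  map_mul' x y := by
    by_cases hx : x = 0
    · simp [hx]
    by_cases hy : y = 0
    · simp [hy]
    simp [hx, hy, w.v_mul hx hy, mul_comm]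
  map_add_le_max' x y := by
    by_cases hx : x = 0
    · simp [hx]
    by_cases hy : y = 0
    · simp [hy]
    by_cases hxy : x + y = 0
    · simp [hxy]
    have := w.min_le_v_add hx hy hxy
    simp only [hx, hy, hxy, if_false, le_max_iff, exp_le_exp]
    omega

lemma valuation_apply {x : K} (hx : x ≠ 0) : w.valuation x = exp (-w.v x) := if_neg hx

lemma v_pow {x : K} (hx : x ≠ 0) (n : ℕ) : w.v (x ^ n) = n * w.v x := by
  have h := w.valuation_apply (pow_ne_zero n hx)
  rw [map_pow, w.valuation_apply hx, ← exp_nsmul, exp_inj] at h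
  simpa using h.symm

/-- The fractional ideal `𝔭^m = {x | x = 0 ∨ m ≤ v x}`, as an additive subgroup of `K`. -/
noncomputable def primePow (m : ℤ) : AddSubgroup K := w.valuation.leAddSubgroup (exp (-m))

variable {w}

lemma mem_primePow_iff_of_ne_zero {m : ℤ} {x : K} (hx : x ≠ 0) : x ∈ w.primePow m ↔ m ≤ w.v x := by
  rw [primePow, Valuation.mem_leAddSubgroup_iff, w.valuation_apply hx, exp_le_exp, neg_le_neg_iff]

lemma mem_primePow_iff {m : ℤ} {x : K} : x ∈ w.primePow m ↔ x = 0 ∨ m ≤ w.v x := by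
  by_cases hx : x = 0
  · simp [hx]
  · simp [hx, mem_primePow_iff_of_ne_zero]

lemma mem_primePow_of_le {m : ℤ} {x : K} (h : m ≤ w.v x) : x ∈ w.primePow m :=
  mem_primePow_iff.2 (Or.inr h)

lemma self_mem_primePow {x : K} : x ∈ w.primePow (w.v x) := mem_primePow_of_le le_rfl

lemma primePow_antitone : Antitone w.primePow := fun _ _ h =>
  w.valuation.leAddSubgroup_monotone (exp_le_exp.2 (neg_le_neg h))

lemma isUnit₁_iff {m : ℤ} {u : K} : w.IsUnit₁ m u ↔ u - 1 ∈ w.primePow m := by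
  rw [mem_primePow_iff, sub_eq_zero, IsUnit₁]

lemma IsUnit₁.mono {m n : ℤ} (hmn : m ≤ n) {u : K} (hu : w.IsUnit₁ n u) : w.IsUnit₁ m u :=
  isUnit₁_iff.2 (primePow_antitone hmn (isUnit₁_iff.1 hu))

lemma IsUnit₁.ne_zero {m : ℤ} (hm : 0 < m) {u : K} (hu : w.IsUnit₁ m u) : u ≠ 0 := by
  rintro rfl
  rw [isUnit₁_iff, zero_sub, neg_mem_iff, mem_primePow_iff_of_ne_zero one_ne_zero, w.v_one] at hu
  omega

lemma exists_forall_isUnit₁_succ_mem_and_isUnit₁_notMem {S : Set K} {M : ℤ}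
    (hM : ∀ u, w.IsUnit₁ M u → u ∈ S) (h1 : ∃ u, w.IsUnit₁ 1 u ∧ u ∉ S) :
    ∃ n : ℕ, 1 ≤ n ∧ (∀ u, w.IsUnit₁ (n + 1) u → u ∈ S) ∧ ∃ u, w.IsUnit₁ n u ∧ u ∉ S := by
  obtain ⟨k, hk, hk'⟩ := Nat.exists_not_and_succ_of_not_zero_of_exists
    (p := fun k : ℕ => ∀ u, w.IsUnit₁ (k + 1) u → u ∈ S)
    (by simpa using h1) ⟨M.toNat, fun u hu => hM u (hu.mono (by omega))⟩
  push Not at hk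
  exact ⟨k + 1, by omega, hk', by simpa using hk⟩

lemma mul_mem_primePow {m n k : ℤ} {x y : K} (hx : x ∈ w.primePow m) (hy : y ∈ w.primePow n)
    (hk : k ≤ m + n) : x * y ∈ w.primePow k := by
  refine primePow_antitone hk ?_
  simp only [primePow, Valuation.mem_leAddSubgroup_iff, map_mul, neg_add, exp_add] at *
  gcongr

lemma mul_mem_primePow_iff {m : ℤ} {c x : K} (hc : c ≠ 0) :
    c * x ∈ w.primePow m ↔ x ∈ w.primePow (m - w.v c) := by
  by_cases hx : x = 0
  · simp [hx]
  rw [mem_primePow_iff_of_ne_zero (mul_ne_zero hc hx), mem_primePow_iff_of_ne_zero hx,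
    w.v_mul hc hx, sub_le_iff_le_add']

lemma sq_mem_primePow_iff {m : ℤ} {x : K} :
    x ^ 2 ∈ w.primePow m ↔ x ∈ w.primePow ((m + 1) / 2) := by
  by_cases hx : x = 0
  · simp [hx]
  rw [mem_primePow_iff_of_ne_zero (pow_ne_zero 2 hx), mem_primePow_iff_of_ne_zero hx, w.v_pow hx]
  omega

lemma exists_le_mem_primePow_mem_primePow (t : ℤ) (x y : K) :
    ∃ m ≤ t, x ∈ w.primePow m ∧ y ∈ w.primePow m :=
  ⟨min t (min (w.v x) (w.v y)), min_le_left _ _, mem_primePow_of_le (by omega),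
    mem_primePow_of_le (by omega)⟩

lemma add_mem_primePow_iff_of_even_of_odd {m : ℤ} {x y : K} (hx : x ≠ 0 → Even (w.v x))
    (hy : y ≠ 0 → Odd (w.v y)) :
    x + y ∈ w.primePow m ↔ x ∈ w.primePow m ∧ y ∈ w.primePow m := by
  refine ⟨fun h => ?_, fun h => add_mem h.1 h.2⟩
  rcases eq_or_ne x 0 with rfl | hx0
  · simpa using h
  rcases eq_or_ne y 0 with rfl | hy0
  · simpa using h
  have hne : -w.v x ≠ -w.v y := by
    have := hx hx0
    have := hy hy0
    grind
  have hmax := w.valuation.map_add_of_distinct_val (x := x) (y := y)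
    (by rwa [w.valuation_apply hx0, w.valuation_apply hy0, Ne, exp_inj])
  simpa only [primePow, Valuation.mem_leAddSubgroup_iff, hmax, max_le_iff] using h

/-- `P` is a uniformizer of `K`, i.e. a nonzero element of valuation `1`; `P ≠ 0` is required since
`w.v 0` is arbitrary. -/
structure IsUniformizer (w : DValuation K) (P : K) : Prop where
  ne_zero : P ≠ 0
  v_eq_one : w.v P = 1

namespace IsUniformizer

variable {P : K} (hP : w.IsUniformizer P)

include hP

lemma sq_add_mul_sq_mem_iff {m : ℤ} {x y : K} :
    x ^ 2 + P * y ^ 2 ∈ w.primePow m ↔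
      x ∈ w.primePow ((m + 1) / 2) ∧ y ∈ w.primePow (m / 2) := by
  have hx : x ^ 2 ≠ 0 → Even (w.v (x ^ 2)) := fun hx => by
    rw [w.v_pow (pow_ne_zero_iff two_ne_zero |>.1 hx)]
    exact ⟨w.v x, two_mul _⟩
  have hy : P * y ^ 2 ≠ 0 → Odd (w.v (P * y ^ 2)) := fun hy => by
    rw [w.v_mul hP.ne_zero (right_ne_zero_of_mul hy), hP.v_eq_one,
      w.v_pow (pow_ne_zero_iff two_ne_zero |>.1 (right_ne_zero_of_mul hy))]
    exact ⟨w.v y, add_comm _ _⟩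
  rw [add_mem_primePow_iff_of_even_of_odd hx hy, sq_mem_primePow_iff,
    mul_mem_primePow_iff hP.ne_zero, hP.v_eq_one, sq_mem_primePow_iff, sub_add_cancel]

/-- Bootstrapping: each bound on `x` and `y` improves the bound on `C`, hence on `x² + P y²`. -/
lemma mem_of_sq_add_mul_sq_add_mem {t : ℤ} {x y C : K}
    (hC : ∀ m < t, x ∈ w.primePow ((m + 1) / 2) → y ∈ w.primePow (m / 2) →
      C ∈ w.primePow (m + 1))
    (h : x ^ 2 + P * y ^ 2 + C ∈ w.primePow t) :
    x ∈ w.primePow ((t + 1) / 2) ∧ y ∈ w.primePow (t / 2) := by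
  obtain ⟨j, hjt, hxj, hyj⟩ := exists_le_mem_primePow_mem_primePow (w := w) t (x ^ 2) (P * y ^ 2)
  suffices ∀ m, j ≤ m → m ≤ t → x ∈ w.primePow ((m + 1) / 2) ∧ y ∈ w.primePow (m / 2) from
    this t hjt le_rfl
  intro m hjm
  induction m, hjm using Int.leInduction with
  | base => exact fun _ => hP.sq_add_mul_sq_mem_iff.1 (add_mem hxj hyj)
  | succ m _ ih =>
    intro hmt
    obtain ⟨hx, hy⟩ := ih (by omega)
    have hCm : C ∈ w.primePow (m + 1) := hC m (by omega) hx hy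
    exact hP.sq_add_mul_sq_mem_iff.1 ((add_mem_cancel_right hCm).1 (primePow_antitone hmt h))

lemma sub_one_mem_and_mem_of_normForm_sub_one_mem {e s t : ℤ} {T a b : K} (h2 : 2 ∈ w.primePow e)
    (hT : T ∈ w.primePow s) (ht : 0 ≤ t) (hte : t ≤ 2 * e) (hts : t < 2 * s)
    (h : normForm T P a b - 1 ∈ w.primePow t) :
    a - 1 ∈ w.primePow ((t + 1) / 2) ∧ b ∈ w.primePow (t / 2) := by
  have h1 : (1 : K) ∈ w.primePow 0 := mem_primePow_of_le w.v_one.ge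
  have ha : a ∈ w.primePow 0 := by
    refine (hP.mem_of_sq_add_mul_sq_add_mem (t := 0) (C := T * a * b) (y := b)
      (fun m _ ham hbm => ?_) ?_).1
    · exact mul_mem_primePow (mul_mem_primePow hT ham le_rfl) hbm (by omega)
    · convert add_mem (primePow_antitone ht h) h1 using 1
      rw [normForm]
      ring
  refine hP.mem_of_sq_add_mul_sq_add_mem (C := 2 * (a - 1) + T * a * b) (fun m _ ham hbm => ?_) ?_
  · exact add_mem (mul_mem_primePow h2 ham (by omega))
      (mul_mem_primePow (mul_mem_primePow hT ha le_rfl) hbm (by omega))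
  · convert h using 1
    rw [normForm]
    ring

end IsUniformizer

end DValuation

lemma exists_forall_add_mul_sq_ne {F : Type*} [Field F] [Finite F] {ρ : F} (hρ : ρ ≠ 0) :
    ∃ y : F, ∀ z, z + ρ * z ^ 2 ≠ y := by
  by_contra! hsurj
  have hinj : Function.Injective fun z : F => z + ρ * z ^ 2 :=
    Finite.injective_iff_surjective.2 hsurj
  have hcollide : (0 : F) = -ρ⁻¹ := hinj (by field_simp; ring)
  exact hρ (by simpa using hcollide)

namespace DValuation

variable {K : Type*} [Field K] {w : DValuation K}

lemma mem_integer_iff {x : K} : x ∈ w.valuation.integer ↔ x ∈ w.primePow 0 := by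
  rw [Valuation.mem_integer_iff, primePow, Valuation.mem_leAddSubgroup_iff, neg_zero, exp_zero]

lemma residue_eq_zero_iff (x : w.valuation.integer) :
    IsLocalRing.residue _ x = 0 ↔ (x : K) ∈ w.primePow 1 := by
  rw [IsLocalRing.residue_eq_zero_iff, IsLocalRing.mem_maximalIdeal, mem_nonunits_iff,
    Valuation.Integer.not_isUnit_iff_valuation_lt_one]
  by_cases hx : (x : K) = 0
  · simp [hx]
  · rw [mem_primePow_iff_of_ne_zero hx, w.valuation_apply hx, ← exp_zero, exp_lt_exp]
    omega

lemma exists_forall_mul_add_mul_sq_sub_notMem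
    [Finite (IsLocalRing.ResidueField w.valuation.integer)] {a b : K} {k : ℤ} (ha : a ≠ 0)
    (hb : b ≠ 0) (hab : w.v a = w.v b + k) :
    ∃ y ∈ w.primePow (w.v a + k),
      ∀ z ∈ w.primePow k, a * z + b * z ^ 2 - y ∉ w.primePow (w.v a + k + 1) := by
  obtain ⟨c, hc, rfl⟩ := w.v_surj k
  have hρv : w.v (b * c / a) = 0 := by
    have := w.v_mul ha (div_ne_zero (mul_ne_zero hb hc) ha)
    rw [mul_div_cancel₀ _ ha, w.v_mul hb hc] at this
    omega
  have hρ : b * c / a ∉ w.primePow 1 := by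
    rw [mem_primePow_iff_of_ne_zero (div_ne_zero (mul_ne_zero hb hc) ha), hρv]
    omega
  let ρ : w.valuation.integer := ⟨b * c / a, mem_integer_iff.2 (mem_primePow_of_le hρv.ge)⟩
  obtain ⟨η, hη⟩ := exists_forall_add_mul_sq_ne (mt (residue_eq_zero_iff ρ).1 hρ)
  obtain ⟨y, rfl⟩ := IsLocalRing.residue_surjective η
  have hac : a * c ≠ 0 := mul_ne_zero ha hc
  refine ⟨a * c * y, ?_, fun z hz hmem => ?_⟩
  · rw [mul_mem_primePow_iff hac, w.v_mul ha hc, sub_self]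
    exact mem_integer_iff.1 y.2
  · let β : w.valuation.integer := ⟨z / c, mem_integer_iff.2 <| by
      rwa [← sub_self (w.v c), ← mul_mem_primePow_iff hc, mul_div_cancel₀ _ hc]⟩
    refine hη (IsLocalRing.residue _ β) (sub_eq_zero.1 ?_)
    rw [← map_pow, ← map_mul, ← map_add, ← map_sub, residue_eq_zero_iff]
    have hfactor : a * z + b * z ^ 2 - a * c * y =
        a * c * (β + ρ * β ^ 2 - y : w.valuation.integer) := by
      simp only [β, ρ, AddSubgroupClass.coe_sub, Subring.coe_add, Subring.coe_mul, Subring.coe_pow]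
      field_simp
    rwa [hfactor, mul_mem_primePow_iff hac, w.v_mul ha hc, add_sub_cancel_left] at hmem

namespace IsUniformizer

variable {P : K} (hP : w.IsUniformizer P)

include hP

lemma exists_isUnit₁_forall_normForm_ne_of_notMem
    [Finite (IsLocalRing.ResidueField w.valuation.integer)] {T : K}
    (hT : T ∈ w.primePow 1) (hT2 : T ∉ w.primePow (w.v 2 + 1)) :
    ∃ u, w.IsUnit₁ 1 u ∧ ∀ a b, normForm T P a b ≠ u := by
  have hT0 : T ≠ 0 := fun h => hT2 (h ▸ zero_mem _)
  have h1s : 1 ≤ w.v T := (mem_primePow_iff_of_ne_zero hT0).1 hT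
  have hse : w.v T ≤ w.v 2 := by
    rw [mem_primePow_iff_of_ne_zero hT0] at hT2
    omega
  obtain ⟨y, hy, hrep⟩ := exists_forall_mul_add_mul_sq_sub_notMem (w := w) (k := w.v T - 1) hT0
    hP.ne_zero (by rw [hP.v_eq_one]; ring)
  refine ⟨1 + y, isUnit₁_iff.2 (by simpa using primePow_antitone (by omega) hy), fun a b hab => ?_⟩
  have hmem : normForm T P a b - 1 ∈ w.primePow (2 * w.v T - 1) := by
    rw [hab, add_sub_cancel_left]
    exact primePow_antitone (by omega) hy
  obtain ⟨ha, hb⟩ := hP.sub_one_mem_and_mem_of_normForm_sub_one_mem self_mem_primePow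
    self_mem_primePow (by omega) (by omega) (by omega) hmem
  refine hrep b (primePow_antitone (by omega) hb) ?_
  have herr : T * b + P * b ^ 2 - y = -((a - 1) ^ 2 + 2 * (a - 1) + T * (a - 1) * b) := by
    rw [normForm] at hab
    linear_combination hab
  have ha' : a - 1 ∈ w.primePow (w.v T) := primePow_antitone (by omega) ha
  rw [herr]
  refine neg_mem (add_mem (add_mem ?_ ?_) ?_)
  · exact sq_mem_primePow_iff.2 (primePow_antitone (by omega) ha')
  · exact mul_mem_primePow (mem_primePow_of_le hse) ha' (by omega)
  · exact mul_mem_primePow (mul_mem_primePow self_mem_primePow ha' le_rfl) hb (by omega)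

lemma exists_isUnit₁_forall_normForm_ne_of_mem
    [Finite (IsLocalRing.ResidueField w.valuation.integer)] {T : K} (h20 : (2 : K) ≠ 0)
    (h2 : 0 < w.v 2) (hT : T ∈ w.primePow (w.v 2 + 1)) :
    ∃ u, w.IsUnit₁ 1 u ∧ ∀ a b, normForm T P a b ≠ u := by
  obtain ⟨y, hy, hrep⟩ := exists_forall_mul_add_mul_sq_sub_notMem (w := w) (k := w.v 2) h20
    one_ne_zero (by rw [w.v_one, zero_add])
  refine ⟨1 + y, isUnit₁_iff.2 (by simpa using primePow_antitone (by omega) hy), fun a b hab => ?_⟩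
  have hmem : normForm T P a b - 1 ∈ w.primePow (2 * w.v 2) := by
    rw [hab, add_sub_cancel_left]
    exact primePow_antitone (by omega) hy
  obtain ⟨ha, hb⟩ := hP.sub_one_mem_and_mem_of_normForm_sub_one_mem self_mem_primePow hT
    (by omega) le_rfl (by omega) hmem
  have ha' : a - 1 ∈ w.primePow (w.v 2) := primePow_antitone (by omega) ha
  have ha0 : a ∈ w.primePow 0 := by
    have := add_mem (primePow_antitone (by omega) ha') (mem_primePow_of_le (w.v_one.ge))
    rwa [sub_add_cancel] at this
  refine hrep (a - 1) ha' ?_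
  have herr : 2 * (a - 1) + 1 * (a - 1) ^ 2 - y = -(T * a * b + P * b ^ 2) := by
    rw [normForm] at hab
    linear_combination hab
  rw [herr]
  refine neg_mem (add_mem ?_ ?_)
  · exact mul_mem_primePow (mul_mem_primePow hT ha0 le_rfl) hb (by omega)
  · have hb2 : b ^ 2 ∈ w.primePow (2 * w.v 2) :=
      sq_mem_primePow_iff.2 (primePow_antitone (by omega) hb)
    exact mul_mem_primePow (mem_primePow_of_le hP.v_eq_one.ge) hb2 (by omega)

lemma exists_isUnit₁_forall_normForm_ne
    [Finite (IsLocalRing.ResidueField w.valuation.integer)] {T : K} (h20 : (2 : K) ≠ 0)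
    (h2 : 0 < w.v 2) (hT : T ∈ w.primePow 1) :
    ∃ u, w.IsUnit₁ 1 u ∧ ∀ a b, normForm T P a b ≠ u := by
  by_cases hT2 : T ∈ w.primePow (w.v 2 + 1)
  · exact hP.exists_isUnit₁_forall_normForm_ne_of_mem h20 h2 hT2
  · exact hP.exists_isUnit₁_forall_normForm_ne_of_notMem hT hT2

end IsUniformizer

section Ramified

variable {K L : Type*} [Field K] [Field L] [Algebra K L] {w : DValuation K} {wL : DValuation L}
  (hram : ∀ x : K, x ≠ 0 → wL.v (algebraMap K L x) = 2 * w.v x)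

include hram

lemma algebraMap_mem_primePow_iff {m : ℤ} {x : K} :
    algebraMap K L x ∈ wL.primePow m ↔ x ∈ w.primePow ((m + 1) / 2) := by
  by_cases hx : x = 0
  · simp [hx]
  rw [mem_primePow_iff_of_ne_zero ((map_ne_zero _).2 hx), mem_primePow_iff_of_ne_zero hx, hram x hx]
  omega

variable {π : L} (hπ : wL.IsUniformizer π)

include hπ

lemma algebraMap_add_algebraMap_mul_mem_primePow_iff {m : ℤ} {a b : K} :
    algebraMap K L a + algebraMap K L b * π ∈ wL.primePow m ↔
      a ∈ w.primePow ((m + 1) / 2) ∧ b ∈ w.primePow (m / 2) := by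
  have ha : algebraMap K L a ≠ 0 → Even (wL.v (algebraMap K L a)) := fun ha => by
    rw [hram a ((map_ne_zero _).1 ha)]
    exact even_two_mul _
  have hb : algebraMap K L b * π ≠ 0 → Odd (wL.v (algebraMap K L b * π)) := fun hb => by
    rw [wL.v_mul (left_ne_zero_of_mul hb) hπ.ne_zero, hπ.v_eq_one,
      hram b ((map_ne_zero _).1 (left_ne_zero_of_mul hb))]
    exact odd_two_mul_add_one _
  rw [add_mem_primePow_iff_of_even_of_odd ha hb, algebraMap_mem_primePow_iff hram, mul_comm,
    mul_mem_primePow_iff hπ.ne_zero, hπ.v_eq_one, algebraMap_mem_primePow_iff hram, sub_add_cancel]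

variable (hL : Module.finrank K L = 2)

include hL

lemma exists_eq_algebraMap_add_algebraMap_mul (y : L) :
    ∃ a b : K, y = algebraMap K L a + algebraMap K L b * π := by
  have hindep : LinearIndependent K ![1, π] := by
    refine (LinearIndependent.pair_iff' one_ne_zero).2 fun a ha => ?_
    rw [← Algebra.algebraMap_eq_smul_one] at ha
    have ha0 : a ≠ 0 := fun h => hπ.ne_zero (by rw [← ha, h, map_zero])
    have := hπ.v_eq_one
    rw [← ha, hram a ha0] at this
    omega
  have hspan := hindep.span_eq_top_of_card_eq_finrank (by simpa using hL.symm)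
  have hy : y ∈ Submodule.span K (Set.range ![1, π]) := hspan ▸ Submodule.mem_top
  rw [Matrix.range_cons_cons_empty, Submodule.mem_span_pair] at hy
  obtain ⟨a, b, rfl⟩ := hy
  exact ⟨a, b, by rw [Algebra.algebraMap_eq_smul_one, Algebra.smul_def b]⟩

lemma trace_mem_and_isUniformizer_norm :
    Algebra.trace K L π ∈ w.primePow 1 ∧ w.IsUniformizer (Algebra.norm K π) := by
  have : FiniteDimensional K L := FiniteDimensional.of_finrank_pos (by omega)
  have hsq : π ^ 2 =
      algebraMap K L (-Algebra.norm K π) + algebraMap K L (Algebra.trace K L π) * π := by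
    rw [sq_eq_trace_mul_sub_norm (Module.finBasisOfFinrankEq K L hL), map_neg]
    ring
  have hmem (m : ℤ) : π ^ 2 ∈ wL.primePow m ↔ Algebra.norm K π ∈ w.primePow ((m + 1) / 2) ∧
      Algebra.trace K L π ∈ w.primePow (m / 2) := by
    rw [hsq, algebraMap_add_algebraMap_mul_mem_primePow_iff hram hπ, neg_mem_iff]
  have hv (m : ℤ) : π ^ 2 ∈ wL.primePow m ↔ m ≤ 2 := by
    rw [mem_primePow_iff_of_ne_zero (pow_ne_zero 2 hπ.ne_zero), wL.v_pow hπ.ne_zero, hπ.v_eq_one]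
    rfl
  obtain ⟨hN, hT⟩ := (hmem 2).1 ((hv 2).2 le_rfl)
  have hN2 : Algebra.norm K π ∉ w.primePow 2 := fun hN2 => by
    have := (hv 3).1 ((hmem 3).2 ⟨hN2, hT⟩)
    omega
  have hN0 : Algebra.norm K π ≠ 0 := fun h => hN2 (h ▸ zero_mem _)
  rw [mem_primePow_iff_of_ne_zero hN0] at hN hN2
  exact ⟨hT, hN0, by omega⟩

omit hπ in
lemma exists_isUnit₁_forall_norm_ne [Finite (IsLocalRing.ResidueField w.valuation.integer)]
    (h20 : (2 : K) ≠ 0) (h2 : 0 < w.v 2) :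
    ∃ u, w.IsUnit₁ 1 u ∧ ∀ y : L, Algebra.norm K y ≠ u := by
  have : FiniteDimensional K L := FiniteDimensional.of_finrank_pos (by omega)
  obtain ⟨π, hπ0, hπ1⟩ := wL.v_surj 1
  have hπ : wL.IsUniformizer π := ⟨hπ0, hπ1⟩
  obtain ⟨hT, hN⟩ := trace_mem_and_isUniformizer_norm hram hπ hL
  obtain ⟨u, hu, hne⟩ := hN.exists_isUnit₁_forall_normForm_ne h20 h2 hT
  refine ⟨u, hu, fun y hy => ?_⟩
  obtain ⟨a, b, rfl⟩ := exists_eq_algebraMap_add_algebraMap_mul hram hπ hL y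
  rw [norm_algebraMap_add_algebraMap_mul (Module.finBasisOfFinrankEq K L hL)] at hy
  exact hne a b hy

end Ramified

section Squares

variable {K : Type*} [Field K] {w : DValuation K}

lemma isSquare_of_isUnit₁ [HenselianLocalRing w.valuation.integer] (h20 : (2 : K) ≠ 0) {u : K}
    (hu : w.IsUnit₁ (2 * w.v 2 + 1) u) : IsSquare u := by
  have h40 : (2 : K) ^ 2 ≠ 0 := pow_ne_zero 2 h20
  have hc : (u - 1) / 2 ^ 2 ∈ w.primePow 1 := by
    rwa [isUnit₁_iff, ← mul_div_cancel₀ (u - 1) h40, mul_mem_primePow_iff h40, w.v_pow h20,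
      Nat.cast_two, add_sub_cancel_left] at hu
  -- `(1 + 2x)² = u` amounts to `x² + x = (u - 1) / 4`, which has the simple root `0` modulo `𝔭`.
  let c : w.valuation.integer :=
    ⟨(u - 1) / 2 ^ 2, mem_integer_iff.2 (primePow_antitone zero_le_one hc)⟩
  obtain ⟨x, hx, -⟩ := HenselianLocalRing.is_henselian
    (Polynomial.X ^ 2 + Polynomial.X - Polynomial.C c) (by monicity!) 0
    (by
      rw [← IsLocalRing.residue_eq_zero_iff, residue_eq_zero_iff]
      simpa [c] using hc)
    (by simp)
  have hroot : (x : K) ^ 2 + x - (u - 1) / 2 ^ 2 = 0 := by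
    simpa [Polynomial.IsRoot, c] using congrArg Subtype.val hx
  refine ⟨1 + 2 * x, ?_⟩
  field_simp at hroot
  linear_combination -hroot

lemma exists_norm_eq_of_isUnit₁ [HenselianLocalRing w.valuation.integer] {L : Type*} [Field L]
    [Algebra K L] (hL : Module.finrank K L = 2) (h20 : (2 : K) ≠ 0) (h2 : 0 ≤ w.v 2) {u : K}
    (hu : w.IsUnit₁ (2 * w.v 2 + 1) u) : ∃ y : L, y ≠ 0 ∧ Algebra.norm K y = u := by
  obtain ⟨c, rfl⟩ := isSquare_of_isUnit₁ h20 hu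
  have hc : c ≠ 0 := left_ne_zero_of_mul (hu.ne_zero (by omega))
  exact ⟨algebraMap K L c, (map_ne_zero _).2 hc, by rw [Algebra.norm_algebraMap, hL, sq]⟩

end Squares

lemma pos_of_v_algebraMap_padic {K : Type*} [Field K] {w : DValuation K} {p : ℕ} [Fact p.Prime]
    [Algebra ℚ_[p] K] [Algebra.IsIntegral ℚ_[p] K] {e : ℤ}
    (hext : ∀ x : ℚ_[p], x ≠ 0 → w.v (algebraMap ℚ_[p] K x) = e * x.valuation) :
    0 < e := by
  have hp : (p : ℚ_[p]) ≠ 0 := by exact_mod_cast (Fact.out : p.Prime).ne_zero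
  have he : 0 ≤ e := by
    have h := mem_integer_iff.1 (natCast_mem w.valuation.integer p)
    rwa [← map_natCast (algebraMap ℚ_[p] K),
      mem_primePow_iff_of_ne_zero ((map_ne_zero _).2 hp), hext _ hp, Padic.valuation_p,
      mul_one] at h
  refine he.lt_of_ne' fun he0 => ?_
  have hrange (x : ℚ_[p]) : algebraMap ℚ_[p] K x ∈ w.valuation.integer := by
    rw [mem_integer_iff]
    rcases eq_or_ne x 0 with rfl | hx
    · simp
    · exact mem_primePow_of_le (by rw [hext x hx, he0, zero_mul])
  obtain ⟨x, hx, hx1⟩ := w.v_surj (-1)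
  have hint : IsIntegral w.valuation.integer x :=
    (Algebra.IsIntegral.isIntegral (R := ℚ_[p]) x).map_of_comp_eq
      ((algebraMap ℚ_[p] K).codRestrict _ hrange) (RingHom.id K) rfl
  have := (Valuation.integer.integers w.valuation).mem_of_integral hint
  rw [mem_integer_iff, mem_primePow_iff_of_ne_zero hx] at this
  omega

section LocalField

variable {K : Type*} [Field K] {w : DValuation K}

lemma valuation_isNontrivial : w.valuation.IsNontrivial := by
  obtain ⟨x, hx, hx1⟩ := w.v_surj 1
  exact ⟨x, (Valuation.ne_zero_iff _).2 hx, by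
    rw [w.valuation_apply hx, hx1, ← exp_zero, Ne, exp_inj]
    omega⟩

variable [ValuativeRel K] [w.valuation.Compatible] [TopologicalSpace K]

lemma exists_primePow_subset_of_mem_nhds_zero [IsValuativeTopology K] {s : Set K}
    (hs : s ∈ nhds 0) :
    ∃ m, (w.primePow m : Set K) ⊆ s := by
  obtain ⟨γ, hγ⟩ := (w.valuation.mem_nhds_zero_iff s).1 hs
  have hγ0 : MonoidWithZeroHom.ValueGroup₀.embedding γ.val ≠ 0 := by simp
  refine ⟨1 - log (MonoidWithZeroHom.ValueGroup₀.embedding γ.val), fun x hx => hγ ?_⟩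
  rw [Set.mem_ofPred_eq, Valuation.restrict_lt_iff_lt_embedding, ← exp_log hγ0]
  refine lt_of_le_of_lt ((Valuation.mem_leAddSubgroup_iff ..).1 hx) (exp_lt_exp.2 ?_)
  omega

lemma continuous_algebraMap_padic [IsValuativeTopology K] {p : ℕ} [Fact p.Prime]
    [Algebra ℚ_[p] K] {e : ℤ} (he : 0 < e)
    (hext : ∀ x : ℚ_[p], x ≠ 0 → w.v (algebraMap ℚ_[p] K x) = e * x.valuation) :
    Continuous (algebraMap ℚ_[p] K) := by
  have hp : 1 < (p : ℝ) := by exact_mod_cast (Fact.out : p.Prime).one_lt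
  refine continuous_of_continuousAt_zero (algebraMap ℚ_[p] K) ?_
  rw [ContinuousAt, map_zero]
  intro s hs
  obtain ⟨m, hm⟩ := exists_primePow_subset_of_mem_nhds_zero (w := w) hs
  have hball : Metric.ball (0 : ℚ_[p]) ((p : ℝ) ^ (-|m|)) ∈ nhds 0 :=
    Metric.ball_mem_nhds _ (zpow_pos (zero_lt_one.trans hp) _)
  refine Filter.mem_map.2 (Filter.mem_of_superset hball fun x hx => hm ?_)
  rcases eq_or_ne x 0 with rfl | hx0
  · simp
  have hval : |m| < x.valuation := by
    rwa [mem_ball_zero_iff, Padic.norm_eq_zpow_neg_valuation hx0, zpow_lt_zpow_iff_right₀ hp,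
      neg_lt_neg_iff] at hx
  refine mem_primePow_of_le ?_
  rw [hext x hx0]
  nlinarith [le_abs_self m, abs_nonneg m]

lemma isNonarchimedeanLocalField [IsValuativeTopology K] {p : ℕ} [Fact p.Prime]
    [Algebra ℚ_[p] K] [FiniteDimensional ℚ_[p] K] {e : ℤ}
    (hext : ∀ x : ℚ_[p], x ≠ 0 → w.v (algebraMap ℚ_[p] K x) = e * x.valuation) :
    IsNonarchimedeanLocalField K := by
  have := continuousSMul_of_algebraMap _ _
    (continuous_algebraMap_padic (pos_of_v_algebraMap_padic hext) hext)
  exact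
    { toLocallyCompactSpace := LocallyCompactSpace.of_finiteDimensional_of_complete ℚ_[p] K
      toIsNontrivial :=
        (ValuativeRel.isNontrivial_iff_isNontrivial w.valuation).2 valuation_isNontrivial }

omit [TopologicalSpace K] in
lemma integer_valuation_eq : w.valuation.integer = (ValuativeRel.valuation K).integer :=
  SetLike.ext fun _ =>
    (ValuativeRel.isEquiv w.valuation (ValuativeRel.valuation K)).le_one_iff_le_one

lemma henselianLocalRing_integer [IsNonarchimedeanLocalField K] :
    HenselianLocalRing w.valuation.integer := by
  rw [integer_valuation_eq]
  let := IsTopologicalAddGroup.rightUniformSpace K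
  have := isUniformAddGroup_of_addCommGroup (G := K)
  have h : HenselianRing _ (IsLocalRing.maximalIdeal (ValuativeRel.valuation K).integer) :=
    inferInstance
  exact ⟨fun f hf a₀ h₁ h₂ => h.is_henselian f hf a₀ h₁ (h₂.map _)⟩

lemma finite_residueField_integer [IsNonarchimedeanLocalField K] :
    Finite (IsLocalRing.ResidueField w.valuation.integer) := by
  have (R : Subring K) [IsLocalRing R] (hR : R = (ValuativeRel.valuation K).integer) :
      Finite (IsLocalRing.ResidueField R) := by
    subst hR
    infer_instance
  exact this _ integer_valuation_eq

end LocalField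

end DValuation

theorem exists_conductor_exponent_of_ramified_general
    {K : Type*} [Field K] (w : DValuation K) [HenselianLocalRing w.valuation.integer]
    [Finite (IsLocalRing.ResidueField w.valuation.integer)] (h20 : (2 : K) ≠ 0) (h2 : 0 < w.v 2)
    {L : Type*} [Field L] [Algebra K L] (hL : Module.finrank K L = 2) (wL : DValuation L)
    (hram : ∀ x : K, x ≠ 0 → wL.v (algebraMap K L x) = 2 * w.v x) :
    ∃ n : ℕ, 1 ≤ n ∧
      (∀ u : K, w.IsUnit₁ ((n : ℤ) + 1) u → ∃ y : L, y ≠ 0 ∧ Algebra.norm K y = u) ∧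
      ∃ u : K, w.IsUnit₁ (n : ℤ) u ∧ ¬ ∃ y : L, y ≠ 0 ∧ Algebra.norm K y = u := by
  obtain ⟨u, hu, hnorm⟩ := DValuation.exists_isUnit₁_forall_norm_ne hram hL h20 h2
  exact DValuation.exists_forall_isUnit₁_succ_mem_and_isUnit₁_notMem
    (S := {u | ∃ y : L, y ≠ 0 ∧ Algebra.norm K y = u})
    (fun _ => DValuation.exists_norm_eq_of_isUnit₁ hL h20 h2.le)
    ⟨u, hu, fun ⟨y, _, hy⟩ => hnorm y hy⟩

/-- For a ramified quadratic extension `L = K(√d)` of a finite extension `K`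
of `ℚ₂` (ramification encoded by `w_L ∘ (K → L) = 2·w_K` for the normalized
valuations), there is an integer `n ≥ 1` such that every unit in `U_{n+1}` is
a norm from `L^×`, while `U_n` is not contained in `N_{L|K}(L^×)`. -/
theorem exists_conductor_exponent_of_ramified
    (K : Type*) [Field K] [Algebra ℚ_[2] K] [FiniteDimensional ℚ_[2] K]
    (w : DValuation K)
    (hext : ∀ x : ℚ_[2], x ≠ 0 →
      w.v (algebraMap ℚ_[2] K x) = w.v (algebraMap ℚ_[2] K 2) * x.valuation)
    (L : Type*) [Field L] [Algebra K L] (hL2 : Module.finrank K L = 2)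
    (d : K) (hd0 : d ≠ 0) (hd : ¬ IsSquare d)
    (hdL : ∃ δ : L, δ ^ 2 = algebraMap K L d)
    (wL : DValuation L)
    (hram : ∀ x : K, x ≠ 0 → wL.v (algebraMap K L x) = 2 * w.v x) :
    ∃ n : ℕ, 1 ≤ n ∧
      (∀ u : K, w.IsUnit₁ ((n : ℤ) + 1) u → ∃ y : L, y ≠ 0 ∧ Algebra.norm K y = u) ∧
      ∃ u : K, w.IsUnit₁ (n : ℤ) u ∧ ¬ ∃ y : L, y ≠ 0 ∧ Algebra.norm K y = u := by
  have hmap2 : algebraMap ℚ_[2] K 2 = 2 := map_ofNat _ 2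
  have h20 : (2 : K) ≠ 0 := hmap2 ▸ (map_ne_zero _).2 two_ne_zero
  have h2 : 0 < w.v 2 := hmap2 ▸ DValuation.pos_of_v_algebraMap_padic hext
  let : ValuativeRel K := .ofValuation w.valuation
  have : w.valuation.Compatible := .ofValuation _
  let : TopologicalSpace K := ValuativeRel.topologicalSpace K
  have : IsNonarchimedeanLocalField K := DValuation.isNonarchimedeanLocalField hext
  have : HenselianLocalRing w.valuation.integer := DValuation.henselianLocalRing_integer
  have : Finite (IsLocalRing.ResidueField w.valuation.integer) :=
    DValuation.finite_residueField_integer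
  exact exists_conductor_exponent_of_ramified_general w h20 h2 hL2 wL hram
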